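/- arXiv:1106.2859 — 3 statements merged into one kernel-verified Lean document; each statement's English description precedes it below -/
import Mathlib

section
/- Let k be a field and α ≥ 1 an integer. The quotient of the polynomial ring k[X] by the k-subalgebra generated by X² and X^{2α+1} (taken as a quotient of k-vector spaces, dividing by the underlying k-submodule of the subalgebra) has dimension α over k. -/
open Polynomial

/-- A power `X ^ n` lies in `k[X², X^(2α+1)]` as soon as `n` is even or `n ≥ 2α+1`. -/
theorem X_pow_mem_adjoin_cusp {k : Type*} [CommSemiring k] {α n : ℕ}
    (hn : Even n ∨ 2 * α + 1 ≤ n) :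
    (X ^ n : k[X]) ∈ Algebra.adjoin k ({X ^ 2, X ^ (2 * α + 1)} : Set k[X]) := by
  have hsq : (X ^ 2 : k[X]) ∈ Algebra.adjoin k ({X ^ 2, X ^ (2 * α + 1)} : Set k[X]) :=
    Algebra.subset_adjoin (by simp)
  have hodd : (X ^ (2 * α + 1) : k[X]) ∈
      Algebra.adjoin k ({X ^ 2, X ^ (2 * α + 1)} : Set k[X]) :=
    Algebra.subset_adjoin (by simp)
  rcases Nat.even_or_odd' n with ⟨m, rfl | rfl⟩
  · rw [pow_mul]
    exact pow_mem hsq m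
  · obtain ⟨j, rfl⟩ : ∃ j, m = α + j := Nat.exists_eq_add_of_le (by grind)
    rw [show 2 * (α + j) + 1 = (2 * α + 1) + 2 * j by ring, pow_add X (2 * α + 1), pow_mul X 2 j]
    exact mul_mem hodd (pow_mem hsq j)

/-- The subalgebra `k[X², X^(2α+1)]` consists of the polynomials whose coefficients of odd
index less than `2α` vanish. -/
theorem mem_adjoin_cusp_iff {k : Type*} [CommSemiring k] {α : ℕ} {p : k[X]} :
    p ∈ Algebra.adjoin k ({X ^ 2, X ^ (2 * α + 1)} : Set k[X]) ↔
      ∀ i < α, p.coeff (2 * i + 1) = 0 := by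
  constructor
  · intro hp
    induction hp using Algebra.adjoin_induction with
    | mem x hx =>
      intro i hi
      rcases hx with rfl | rfl <;> rw [coeff_X_pow, if_neg (by omega)]
    | algebraMap r =>
      intro i _
      rw [algebraMap_eq, coeff_C_succ]
    | add x y _ _ hx hy =>
      intro i hi
      rw [coeff_add, hx i hi, hy i hi, add_zero]
    | mul x y _ _ hx hy =>
      intro i hi
      rw [coeff_mul]
      refine Finset.sum_eq_zero fun ⟨a, b⟩ hab => ?_
      rw [Finset.HasAntidiagonal.mem_antidiagonal] at hab
      dsimp only at hab ⊢
      rcases Nat.even_or_odd' a with ⟨c, rfl | rfl⟩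
      · obtain ⟨d, rfl⟩ : ∃ d, b = 2 * d + 1 := ⟨i - c, by omega⟩
        rw [hy d (by omega), mul_zero]
      · rw [hx c (by omega), zero_mul]
  · intro hp
    rw [p.as_sum_support_C_mul_X_pow]
    refine sum_mem fun n hn => ?_
    rw [← smul_eq_C_mul]
    refine Subalgebra.smul_mem _ (X_pow_mem_adjoin_cusp ?_) _
    by_contra! h
    obtain ⟨i, rfl⟩ := Nat.not_even_iff_odd.mp h.1
    exact mem_support_iff.mp hn (hp i (by omega))

/-- The quotient of `k[X]` by the `k`-subalgebra generated by `X²` and `X^(2α+1)`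
(as a quotient of `k`-vector spaces) has dimension `α`. -/
theorem finrank_quotient_cusp_zero (k : Type*) [Field k] (α : ℕ) (hα : 1 ≤ α) :
    Module.finrank k
      (k[X] ⧸ Subalgebra.toSubmodule
        (Algebra.adjoin k ({X ^ 2, X ^ (2 * α + 1)} : Set k[X]))) = α := by
  let φ : k[X] →ₗ[k] (Fin α → k) := LinearMap.pi fun i => lcoeff k (2 * (i : ℕ) + 1)
  have hker : Subalgebra.toSubmodule
      (Algebra.adjoin k ({X ^ 2, X ^ (2 * α + 1)} : Set k[X])) = LinearMap.ker φ := by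
    ext p
    rw [Subalgebra.mem_toSubmodule, mem_adjoin_cusp_iff, LinearMap.mem_ker, funext_iff,
      Fin.forall_iff]
    rfl
  have hsurj : Function.Surjective φ := by
    intro v
    refine ⟨∑ j : Fin α, monomial (2 * (j : ℕ) + 1) (v j), ?_⟩
    ext i
    simp [φ, coeff_monomial, Fin.val_inj]
  rw [hker, (φ.quotKerEquivOfSurjective hsurj).finrank_eq, Module.finrank_fin_fun]
end

section
/- Let k be a field and α ≥ 1 an integer. The quotient of the polynomial ring k[X] by the k-subalgebra generated by X^{2α−1} and X^{2α+1} (taken as a quotient of k-vector spaces, dividing by the underlying k-submodule of the subalgebra) has dimension 2α(α−1) over k. -/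
open Polynomial

/-- A polynomial lies in the subalgebra generated by the powers `X ^ t`, `t ∈ T`, iff its exponents
lie in the additive submonoid generated by `T`. -/
lemma mem_adjoin_X_pow_iff {R : Type*} [CommSemiring R] (T : Set ℕ) (p : R[X]) :
    p ∈ Algebra.adjoin R ((fun t : ℕ => (X : R[X]) ^ t) '' T) ↔
      ∀ i ∉ AddSubmonoid.closure T, p.coeff i = 0 := by
  constructor
  · intro hp
    induction hp using Algebra.adjoin_induction with
    | mem x hx =>
      obtain ⟨t, ht, rfl⟩ := hx
      intro i hi
      have hit : i ≠ t := by
        rintro rfl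
        exact hi (AddSubmonoid.subset_closure ht)
      simp [coeff_X_pow, hit]
    | algebraMap r =>
      intro i hi
      have hi0 : i ≠ 0 := by
        rintro rfl
        exact hi (zero_mem _)
      simp [coeff_C, hi0]
    | add x y _ _ hx hy =>
      intro i hi
      simp [hx i hi, hy i hi]
    | mul x y _ _ hx hy =>
      intro i hi
      rw [coeff_mul]
      refine Finset.sum_eq_zero fun ⟨a, b⟩ hab => ?_
      rw [Finset.HasAntidiagonal.mem_antidiagonal] at hab
      by_cases ha : a ∈ AddSubmonoid.closure T
      · have hb : b ∉ AddSubmonoid.closure T := fun hb => hi (hab ▸ add_mem ha hb)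
        simp [hy b hb]
      · simp [hx a ha]
  · intro hp
    have hX : ∀ i ∈ AddSubmonoid.closure T,
        (X : R[X]) ^ i ∈ Algebra.adjoin R ((fun t : ℕ => (X : R[X]) ^ t) '' T) := by
      intro i hi
      induction hi using AddSubmonoid.closure_induction with
      | mem x hx => exact Algebra.subset_adjoin ⟨x, hx, rfl⟩
      | zero => simp
      | add x y _ _ hx hy =>
        rw [pow_add]
        exact mul_mem hx hy
    rw [p.as_sum_support_C_mul_X_pow]
    refine sum_mem fun i hi => ?_
    rw [← smul_eq_C_mul]
    refine Subalgebra.smul_mem _ (hX i ?_) _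
    by_contra h
    exact mem_support_iff.mp hi (hp i h)

/-- The codimension in `k[X]` of the subalgebra generated by the powers `X ^ t`, `t ∈ T`, is the
number of gaps of the numerical semigroup generated by `T`. -/
lemma finrank_quotient_adjoin_X_pow (k : Type*) [Field k] (T : Set ℕ) (G : Finset ℕ)
    (hG : ∀ i, i ∈ G ↔ i ∉ AddSubmonoid.closure T) :
    Module.finrank k
      (k[X] ⧸ Subalgebra.toSubmodule
        (Algebra.adjoin k ((fun t : ℕ => (X : k[X]) ^ t) '' T))) = G.card := by
  let f : k[X] →ₗ[k] (G → k) := LinearMap.pi fun i => lcoeff k i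
  have hker : LinearMap.ker f = Subalgebra.toSubmodule
      (Algebra.adjoin k ((fun t : ℕ => (X : k[X]) ^ t) '' T)) := by
    ext p
    rw [Subalgebra.mem_toSubmodule, mem_adjoin_X_pow_iff, LinearMap.mem_ker, funext_iff]
    simp [f, hG]
  have hsurj : Function.Surjective f := by
    intro v
    refine ⟨∑ j : G, monomial (j : ℕ) (v j), ?_⟩
    ext i
    simp [f, coeff_monomial]
  rw [← hker, (f.quotKerEquivOfSurjective hsurj).finrank_eq]
  simp

/-- Of two integers with sum `m * n - m - n`, at least one is a nonnegative combination of the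
coprime numbers `m` and `n`. -/
lemma exists_nonneg_combination_or {m n : ℕ} (hm : 0 < m) (h : m.Coprime n) (x : ℤ) :
    (∃ a b : ℕ, (a * m + b * n : ℤ) = x) ∨
      ∃ a b : ℕ, (a * m + b * n : ℤ) = m * n - m - n - x := by
  have hm' : (0 : ℤ) < m := by exact_mod_cast hm
  obtain ⟨u, v, huv⟩ : IsCoprime (m : ℤ) n := Nat.isCoprime_iff_coprime.mpr h
  obtain ⟨b, hb⟩ := Int.eq_ofNat_of_zero_le (Int.emod_nonneg (v * x) hm'.ne')
  have hbm : (b : ℤ) < m := hb ▸ Int.emod_lt_of_pos (v * x) hm'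
  have hdiv := Int.emod_add_mul_ediv (v * x) m
  rw [hb] at hdiv
  obtain ⟨t, ht⟩ : ∃ t : ℤ, x = b * n + m * t :=
    ⟨u * x + v * x / m * n, by linear_combination (-x) * huv - (n : ℤ) * hdiv⟩
  rcases le_or_gt 0 t with h0 | h0
  · lift t to ℕ using h0
    exact .inl ⟨t, b, by rw [ht]; ring⟩
  · right
    obtain ⟨a, ha⟩ := Int.eq_ofNat_of_zero_le (show 0 ≤ -t - 1 by lia)
    obtain ⟨c, hc⟩ := Int.eq_ofNat_of_zero_le (show 0 ≤ (m : ℤ) - 1 - b by lia)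
    refine ⟨a, c, ?_⟩
    rw [← ha, ← hc, ht]
    ring

/-- **Sylvester's theorem**: the semigroup generated by the coprime numbers `m` and `n` has
`(m - 1) * (n - 1) / 2` gaps. -/
lemma exists_finset_gaps_pair {m n : ℕ} (hm : 0 < m) (hn : 0 < n) (h : m.Coprime n) :
    ∃ G : Finset ℕ, (∀ i, i ∈ G ↔ i ∉ AddSubmonoid.closure {m, n}) ∧
      2 * G.card = (m - 1) * (n - 1) := by
  classical
  obtain ⟨m, rfl⟩ := Nat.exists_eq_add_of_lt hm
  obtain ⟨n, rfl⟩ := Nat.exists_eq_add_of_lt hn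
  simp only [zero_add, Nat.add_sub_cancel] at *
  set S := AddSubmonoid.closure {m + 1, n + 1} with hS
  have hmem : ∀ i, i ∈ S ↔ ∃ a b : ℕ, a * (m + 1) + b * (n + 1) = i := by
    simp [hS, AddSubmonoid.mem_closure_pair]
  have hlarge : ∀ i ∉ S, i < m * n := by
    intro i hi
    rcases exists_nonneg_combination_or hm h i with ⟨a, b, hab⟩ | ⟨a, b, hab⟩
    · exact absurd ((hmem i).mpr ⟨a, b, by exact_mod_cast hab⟩) hi
    · have : (0 : ℤ) ≤ a * (m + 1 : ℕ) + b * (n + 1 : ℕ) := by positivity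
      zify
      push_cast at *
      linarith
  have hsymm : ∀ i j, i + j + 1 = m * n → (i ∈ S ↔ j ∉ S) := by
    intro i j hij
    constructor
    · intro hi hj
      obtain ⟨a, b, hab⟩ := (hmem i).mp hi
      obtain ⟨c, d, hcd⟩ := (hmem j).mp hj
      refine h.mul_add_mul_ne_mul (a := a + c + 1) (b := b + d + 1) (by simp) (by simp) ?_
      linarith
    · intro hj
      rcases exists_nonneg_combination_or hm h i with ⟨a, b, hab⟩ | ⟨a, b, hab⟩
      · exact (hmem i).mpr ⟨a, b, by exact_mod_cast hab⟩
      · refine absurd ((hmem j).mpr ⟨a, b, ?_⟩) hj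
        zify at hij ⊢
        push_cast at hab
        linarith
  refine ⟨(Finset.range (m * n)).filter (· ∉ S), fun i => ?_, ?_⟩
  · simpa using hlarge i
  · have hcard : ((Finset.range (m * n)).filter (· ∈ S)).card =
        ((Finset.range (m * n)).filter (· ∉ S)).card := by
      refine Finset.card_bij' (fun i _ => m * n - 1 - i) (fun i _ => m * n - 1 - i) ?_ ?_ ?_ ?_
      · intro i hi
        rw [Finset.mem_filter, Finset.mem_range] at hi ⊢
        exact ⟨by lia, (hsymm i _ (by lia)).mp hi.2⟩
      · intro i hi
        rw [Finset.mem_filter, Finset.mem_range] at hi ⊢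
        exact ⟨by lia, (hsymm _ i (by lia)).mpr hi.2⟩
      all_goals
        intro i hi
        rw [Finset.mem_filter, Finset.mem_range] at hi
        lia
    have htotal := Finset.card_filter_add_card_filter_not (s := Finset.range (m * n)) (· ∈ S)
    rw [Finset.card_range] at htotal
    lia

/-- The quotient of `k[X]` by the `k`-subalgebra generated by `X^(2α−1)` and
`X^(2α+1)` (as a quotient of `k`-vector spaces) has dimension `2α(α−1)`. -/
theorem finrank_quotient_cusp_infty (k : Type*) [Field k] (α : ℕ) (hα : 1 ≤ α) :
    Module.finrank k
      (k[X] ⧸ Subalgebra.toSubmodule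
        (Algebra.adjoin k ({X ^ (2 * α - 1), X ^ (2 * α + 1)} : Set k[X]))) =
      2 * α * (α - 1) := by
  have hcop : (2 * α - 1).Coprime (2 * α + 1) := by
    have hodd : (2 * α - 1).Coprime 2 := Nat.coprime_two_right.mpr ⟨α - 1, by lia⟩
    rw [show 2 * α + 1 = 2 + (2 * α - 1) by lia]
    exact Nat.coprime_add_self_right.mpr hodd
  obtain ⟨G, hG, hcard⟩ := exists_finset_gaps_pair (by lia) (by lia) hcop
  have hrank := finrank_quotient_adjoin_X_pow k _ G hG
  rw [Set.image_pair] at hrank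
  rw [hrank]
  obtain ⟨β, rfl⟩ := Nat.exists_eq_add_of_le' hα
  rw [show 2 * (β + 1) - 1 - 1 = 2 * β by lia, Nat.add_sub_cancel] at hcard
  rw [Nat.add_sub_cancel]
  linarith
end

section
/- Let k be a field and α ≥ 1 an integer, and let A ⊆ k[X] be the k-subalgebra generated by X² and X^{2α+1}. Then the set of trailing degrees (orders of vanishing at 0) of the nonzero elements of A equals the additive submonoid of ℕ generated by {2, 2α+1}. -/
open Polynomial

/-- Every exponent occurring in an element of the subalgebra generated by the monomials `X ^ i`,
`i ∈ s`, lies in the additive submonoid generated by `s`. -/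
lemma mem_closure_of_coeff_ne_zero_of_mem_adjoin_X_pow {R : Type*} [CommSemiring R] {s : Set ℕ}
    {p : R[X]} (hp : p ∈ Algebra.adjoin R ((fun i : ℕ => (X : R[X]) ^ i) '' s)) :
    ∀ n, p.coeff n ≠ 0 → n ∈ AddSubmonoid.closure s := by
  induction hp using Algebra.adjoin_induction with
  | mem x hx =>
    obtain ⟨i, hi, rfl⟩ := hx
    intro n hn
    obtain rfl : n = i := by
      by_contra h
      exact hn (by simp [coeff_X_pow, h])
    exact AddSubmonoid.subset_closure hi
  | algebraMap r =>
    intro n hn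
    obtain rfl : n = 0 := by
      by_contra h
      exact hn (by simp [coeff_C, h])
    exact zero_mem _
  | add x y _ _ hx hy =>
    intro n hn
    by_cases h : x.coeff n = 0
    · exact hy n fun h' => hn (by simp [h, h'])
    · exact hx n h
  | mul x y _ _ hx hy =>
    intro n hn
    rw [coeff_mul] at hn
    obtain ⟨⟨i, j⟩, hij, h⟩ := Finset.exists_ne_zero_of_sum_ne_zero hn
    rw [← Finset.HasAntidiagonal.mem_antidiagonal.mp hij]
    exact add_mem (hx i (left_ne_zero_of_mul h)) (hy j (right_ne_zero_of_mul h))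

/-- The subalgebra generated by the monomials `X ^ i`, `i ∈ s`, contains `X ^ n` for every `n` in
the additive submonoid generated by `s`. -/
lemma X_pow_mem_adjoin_of_mem_closure {R : Type*} [CommSemiring R] {s : Set ℕ} {n : ℕ}
    (hn : n ∈ AddSubmonoid.closure s) :
    (X : R[X]) ^ n ∈ Algebra.adjoin R ((fun i : ℕ => (X : R[X]) ^ i) '' s) := by
  induction hn using AddSubmonoid.closure_induction with
  | mem i hi => exact Algebra.subset_adjoin ⟨i, hi, rfl⟩
  | zero => simp
  | add i j _ _ hi hj => simpa only [pow_add] using mul_mem hi hj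

/-- The trailing degrees of the nonzero elements of the subalgebra generated by the monomials
`X ^ i`, `i ∈ s`, form the additive submonoid generated by `s`. -/
lemma setOf_natTrailingDegree_adjoin_X_pow (R : Type*) [CommSemiring R] [Nontrivial R]
    (s : Set ℕ) :
    {n : ℕ | ∃ p : R[X], p ∈ Algebra.adjoin R ((fun i : ℕ => (X : R[X]) ^ i) '' s) ∧ p ≠ 0 ∧
        p.natTrailingDegree = n} = ↑(AddSubmonoid.closure s) := by
  ext n
  constructor
  · rintro ⟨p, hp, hp0, rfl⟩
    exact mem_closure_of_coeff_ne_zero_of_mem_adjoin_X_pow hp _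
      (trailingCoeff_nonzero_iff_nonzero.mpr hp0)
  · intro hn
    exact ⟨X ^ n, X_pow_mem_adjoin_of_mem_closure hn, (monic_X_pow n).ne_zero, by
      rw [← monomial_one_right_eq_X_pow, natTrailingDegree_monomial one_ne_zero]⟩

/-- The set of orders of vanishing at `0` (trailing degrees) of the nonzero
elements of the subalgebra `k[X², X^(2α+1)] ⊆ k[X]` is the numerical semigroup
generated by `{2, 2α+1}`. -/
theorem valuation_semigroup_cusp_zero (k : Type*) [Field k] (α : ℕ) (hα : 1 ≤ α) :
    {n : ℕ | ∃ p : k[X],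
        p ∈ Algebra.adjoin k ({X ^ 2, X ^ (2 * α + 1)} : Set k[X]) ∧ p ≠ 0 ∧
        p.natTrailingDegree = n} =
      ↑(AddSubmonoid.closure ({2, 2 * α + 1} : Set ℕ)) := by
  simpa only [Set.image_pair] using setOf_natTrailingDegree_adjoin_X_pow k {2, 2 * α + 1}
end
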